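/- arXiv:2509.18931 — 2 statements merged into one kernel-verified Lean document; each statement's English description precedes it below -/
import Mathlib

section
/- For any 0 ≤ s ≤ n−2 and 1 ≤ g ≤ min{s+1, ⌊(n−s)/2⌋}, one has c_{s,g} ≤ (C(2(n−s), n−s) / C(2n−s, n)) · C(s+1, g) · 2^{g−1} / ((g−1)! · (n−s−g)^{g−1}). -/
open MeasureTheory Filter

namespace RandomHypercube

/-- Index of a (potential) hypercube edge: the lower endpoint `A` together with the
direction `i` that is added, representing the edge from `A` to `A ∪ {i}`. -/
abbrev EdgeIdx (n : ℕ) := Finset (Fin n) × Fin n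

/-- The sample space: an i.i.d. Uniform[0,1] weight for each edge index. -/
abbrev CubeOmega (n : ℕ) := EdgeIdx n → ℝ

/-- The product of uniform measures on [0,1], one for each edge. -/
noncomputable def cubeMeasure (n : ℕ) : Measure (CubeOmega n) :=
  Measure.pi fun _ => (volume : Measure ℝ).restrict (Set.Icc 0 1)

/-- The vertex visited by the direct path associated to the permutation `σ`
just before taking its `j`-th step: the image under `σ` of `{0, …, j-1}`. -/
def initSeg (n : ℕ) (σ : Equiv.Perm (Fin n)) (j : Fin n) : Finset (Fin n) :=
  (Finset.univ.filter fun i => i < j).image σ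

/-- The edge used in the `j`-th step of the direct path associated to `σ`. -/
def pathEdge (n : ℕ) (σ : Equiv.Perm (Fin n)) (j : Fin n) : EdgeIdx n :=
  (initSeg n σ j, σ j)

/-- The direct path associated to `σ` is accessible if its successive edge
weights are strictly increasing. -/
def Accessible (n : ℕ) (σ : Equiv.Perm (Fin n)) (ω : CubeOmega n) : Prop :=
  StrictMono fun j : Fin n => ω (pathEdge n σ j)

/-- The number of accessible direct paths from `∅` to `[n]`. -/
noncomputable def X (n : ℕ) (ω : CubeOmega n) : ℕ :=
  Nat.card {σ : Equiv.Perm (Fin n) // Accessible n σ ω}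


/-- The set of steps `j` at which the direct paths of `σ` and `σ'` use the same edge
(shared edges necessarily occur at the same level in both paths). -/
def sharedSteps (n : ℕ) (σ σ' : Equiv.Perm (Fin n)) : Finset (Fin n) :=
  Finset.univ.filter fun j => pathEdge n σ j = pathEdge n σ' j

/-- Given the sorted list `l` of steps (levels) of the shared edges, the gap vector:
the number of edges before the first shared edge, strictly between consecutive shared
edges, and after the last shared edge. -/
def gapsOfList (n : ℕ) (l : List ℕ) : List ℕ :=
  List.zipWith (fun a b => b - a) (0 :: l.map (· + 1)) (l ++ [n])

/-- The gap vector of the direct path of `σ'` relative to that of `σ`. -/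
def gapVector (n : ℕ) (σ σ' : Equiv.Perm (Fin n)) : List ℕ :=
  gapsOfList n (((sharedSteps n σ σ').sort (· ≤ ·)).map Fin.val)

/-- The number of (nontrivial) gaps between the direct paths of `σ` and `σ'`:
the number of nonzero entries of the gap vector. -/
def numGaps (n : ℕ) (σ σ' : Equiv.Perm (Fin n)) : ℕ :=
  ((gapVector n σ σ').filter (· != 0)).length

/-- The probability that the direct paths of `σ` and `σ'` are both accessible. -/
noncomputable def pairProb (n : ℕ) (σ σ' : Equiv.Perm (Fin n)) : ℝ :=
  (cubeMeasure n {ω | Accessible n σ ω ∧ Accessible n σ' ω}).toReal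

/-- `c n s g`: the sum, over all ordered pairs of direct paths sharing exactly `s`
edges with `g` gaps, of the probability that both paths are accessible. -/
noncomputable def c (n s g : ℕ) : ℝ :=
  ∑ p ∈ Finset.univ.filter
      (fun p : Equiv.Perm (Fin n) × Equiv.Perm (Fin n) =>
        (sharedSteps n p.1 p.2).card = s ∧ numGaps n p.1 p.2 = g),
    pairProb n p.1 p.2

/-- `w m`: the number of direct paths from `∅` to `[m]` in the `m`-dimensional hypercube
that are edge-disjoint from the canonical path (the identity permutation). -/
noncomputable def w (m : ℕ) : ℕ :=
  Nat.card {σ : Equiv.Perm (Fin m) // sharedSteps m σ 1 = ∅}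

end RandomHypercube

namespace RandomHypercube

lemma sm_unique {n : ℕ} {E : Type*} [DecidableEq E] (v : E → ℝ)
    (hv : Function.Injective v) (f f' : Fin n → E) (hf : StrictMono (v ∘ f))
    (hf' : StrictMono (v ∘ f')) (U : Finset (Fin n)) (h : U.image f = U.image f') :
    ∀ j ∈ U, f j = f' j := by
  have h1 : StrictMono (fun j : U => v (f j)) := fun a b hab => hf hab
  have h2 : StrictMono (fun j : U => v (f' j)) := fun a b hab => hf' hab
  have h3 : Set.range (fun j : U => v (f j)) = Set.range (fun j : U => v (f' j)) := by
    have e : ∀ F : Fin n → E, Set.range (fun j : U => v (F j)) = v '' (U.image F : Finset E) := by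
      intro F
      ext x
      simp
    rw [e, e, h]
  have h4 := (h1.range_inj h2).1 h3
  intro j hj
  exact hv (congrFun h4 ⟨j, hj⟩)

section count
variable {n : ℕ} {E : Type*} [Fintype E] [DecidableEq E]

lemma card_E (p q : Fin n → E) (lev : E → Fin n)
    (hp : ∀ j, lev (p j) = j) (hq : ∀ j, lev (q j) = j)
    (hs : ∀ e, e = p (lev e) ∨ e = q (lev e)) :
    Fintype.card E = 2 * n - (Finset.univ.filter fun j => p j = q j).card := by
  have hpi : Function.Injective p := fun a b h => by rw [← hp a, ← hp b, h]
  have hqi : Function.Injective q := fun a b h => by rw [← hq a, ← hq b, h]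
  have h1 : (Finset.univ : Finset E) = Finset.univ.image p ∪ Finset.univ.image q := by
    ext e
    simp only [Finset.mem_univ, Finset.mem_union, Finset.mem_image, true_and, true_iff]
    rcases hs e with h | h
    · exact Or.inl ⟨_, h.symm⟩
    · exact Or.inr ⟨_, h.symm⟩
  have h2 : Finset.univ.image p ∩ Finset.univ.image q
      = (Finset.univ.filter fun j => p j = q j).image p := by
    ext e
    simp only [Finset.mem_inter, Finset.mem_image, Finset.mem_univ, true_and, Finset.mem_filter]
    constructor
    · rintro ⟨⟨a, rfl⟩, ⟨b, hb⟩⟩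
      have : a = b := by rw [← hp a, ← hb, hq]
      subst this
      exact ⟨a, hb.symm, rfl⟩
    · rintro ⟨a, h, rfl⟩
      exact ⟨⟨a, rfl⟩, ⟨a, h.symm⟩⟩
  have h3 := Finset.card_union_add_card_inter (Finset.univ.image p) (Finset.univ.image q)
  rw [← h1, h2, Finset.card_image_of_injective _ hpi, Finset.card_image_of_injective _ hpi,
    Finset.card_image_of_injective _ hqi, Finset.card_univ, Finset.card_univ, Fintype.card_fin] at h3
  omega

open Classical in
lemma count_le (p q : Fin n → E) (lev : E → Fin n)
    (hp : ∀ j, lev (p j) = j) (hq : ∀ j, lev (q j) = j)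
    (hs : ∀ e, e = p (lev e) ∨ e = q (lev e)) (v : E → ℝ) (hv : Function.Injective v)
    (s : ℕ) (hcard : (Finset.univ.filter fun j => p j = q j).card = s) :
    (Finset.univ.filter fun τ : Equiv.Perm E =>
      StrictMono (v ∘ (τ ∘ p)) ∧ StrictMono (v ∘ (τ ∘ q))).card
      ≤ (2 * (n - s)).choose (n - s) := by
  have hpi : Function.Injective p := fun a b h => by rw [← hp a, ← hp b, h]
  have hqi : Function.Injective q := fun a b h => by rw [← hq a, ← hq b, h]
  have hE := card_E p q lev hp hq hs
  have hpq : ∀ a b, p a = q b → a = b := fun a b h => by rw [← hp a, h, hq]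
  rw [hcard] at hE
  set S := Finset.univ.filter fun j => p j = q j with hS
  have hsn : s ≤ n := by
    rw [← hcard]; simpa using Finset.card_le_univ S
  set P := Finset.univ.filter fun τ : Equiv.Perm E =>
      StrictMono (v ∘ (τ ∘ p)) ∧ StrictMono (v ∘ (τ ∘ q)) with hP
  rcases P.eq_empty_or_nonempty with h0 | ⟨τ0, hτ0⟩
  · simp [h0]
  have rank : ∀ τ ∈ P, ∀ j ∈ S, ∀ e, v (τ e) < v (τ (p j)) ↔ lev e < j := by
    intro τ hτ j hj e
    simp only [hP, Finset.mem_filter, Finset.mem_univ, true_and] at hτ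
    simp only [hS, Finset.mem_filter, Finset.mem_univ, true_and] at hj
    rcases hs e with h | h
    · rw [h, hp]
      exact hτ.1.lt_iff_lt
    · rw [h, hq, hj]
      exact hτ.2.lt_iff_lt
  have rank2 : ∀ τ ∈ P, ∀ j ∈ S, (Finset.univ.filter fun x => v x < v (τ (p j))).card
      = (Finset.univ.filter fun e => lev e < j).card := by
    intro τ hτ j hj
    symm
    apply Finset.card_bij (fun e _ => τ e)
    · intro e he
      simpa [rank τ hτ j hj] using he
    · intro a _ b _ h
      exact τ.injective h
    · intro x hx
      refine ⟨τ.symm x, ?_, by simp⟩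
      have := rank τ hτ j hj (τ.symm x)
      simp only [Finset.mem_filter, Finset.mem_univ, true_and] at hx ⊢
      rw [← this]; simpa using hx
  have notlt : ∀ τ ∈ P, ∀ τ' ∈ P, ∀ j ∈ S, ¬ v (τ (p j)) < v (τ' (p j)) := by
    intro τ hτ τ' hτ' j hj hlt
    have h1 := rank2 τ hτ j hj
    have h2 := rank2 τ' hτ' j hj
    have : (Finset.univ.filter fun x => v x < v (τ (p j))) ⊂
        (Finset.univ.filter fun x => v x < v (τ' (p j))) := by
      rw [Finset.ssubset_iff_of_subset]
      · exact ⟨τ (p j), by simpa using hlt, by simp⟩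
      · intro x hx
        simp only [Finset.mem_filter, Finset.mem_univ, true_and] at hx ⊢
        exact hx.trans hlt
    have := Finset.card_lt_card this
    omega
  have eqS : ∀ τ ∈ P, ∀ τ' ∈ P, ∀ j ∈ S, τ (p j) = τ' (p j) := by
    intro τ hτ τ' hτ' j hj
    apply hv
    exact le_antisymm (not_lt.1 (notlt τ' hτ' τ hτ j hj)) (not_lt.1 (notlt τ hτ τ' hτ' j hj))
  set R : Finset E := Finset.univ \ S.image (τ0 ∘ p) with hR
  have hRc : R.card = 2 * (n - s) := by
    rw [hR, Finset.card_sdiff_of_subset (Finset.subset_univ _), Finset.card_univ, hE,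
      Finset.card_image_of_injective _ (τ0.injective.comp hpi), hcard]
    omega
  rw [← hRc, ← Finset.card_powersetCard]
  apply Finset.card_le_card_of_injOn (fun τ : Equiv.Perm E => Sᶜ.image (τ ∘ p))
  · intro τ hτ
    simp only [Finset.mem_coe, Finset.mem_powersetCard]
    constructor
    · intro x hx
      simp only [Finset.mem_image, Finset.mem_compl, Function.comp] at hx
      obtain ⟨j, hj, rfl⟩ := hx
      simp only [hR, Finset.mem_sdiff, Finset.mem_univ, true_and, Finset.mem_image, not_exists,
        not_and, Function.comp]
      intro i hi h
      rw [eqS τ0 hτ0 τ hτ i hi] at h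
      exact hj (hpi (τ.injective h) ▸ hi)
    · rw [Finset.card_image_of_injective _ (τ.injective.comp hpi), Finset.card_compl, hcard]
      simp
  · intro τ hτ τ' hτ' h
    have hτ2 := hτ
    have hτ2' := hτ'
    simp only [hP, Finset.coe_filter, Set.mem_ofPred_eq, Finset.mem_univ, true_and] at hτ2 hτ2'
    have e1 : ∀ j, τ (p j) = τ' (p j) := by
      intro j
      by_cases hj : j ∈ S
      · exact eqS τ hτ τ' hτ' j hj
      · exact sm_unique v hv _ _ hτ2.1 hτ2'.1 Sᶜ h j (by simpa using hj)
    have e2 : ∀ τ : Equiv.Perm E, Sᶜ.image (τ ∘ q) = Finset.univ \ Finset.univ.image (τ ∘ p) := by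
      intro τ
      ext x
      obtain ⟨e, rfl⟩ := τ.surjective x
      simp only [Finset.mem_image, Finset.mem_compl, Function.comp, Finset.mem_sdiff,
        Finset.mem_univ, true_and, τ.injective.eq_iff]
      constructor
      · rintro ⟨j, hj, rfl⟩ ⟨i, hi⟩
        have := hpq _ _ hi
        subst this
        exact hj (by simpa [hS] using hi)
      · intro hne
        rcases hs e with h | h
        · exact absurd ⟨_, h.symm⟩ hne
        · refine ⟨lev e, ?_, h.symm⟩
          simp only [hS, Finset.mem_filter, Finset.mem_univ, true_and]
          intro h'
          exact hne ⟨lev e, by rw [h', ← h]⟩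
    have e3 : ∀ j, τ (q j) = τ' (q j) := by
      intro j
      by_cases hj : j ∈ S
      · have : p j = q j := by simpa [hS] using hj
        rw [← this]; exact e1 j
      · refine sm_unique v hv _ _ hτ2.2 hτ2'.2 Sᶜ ?_ j (by simpa using hj)
        rw [e2, e2]
        have : (τ ∘ p) = τ' ∘ p := funext e1
        rw [this]
    ext e
    rcases hs e with h | h
    · rw [h]; exact e1 _
    · rw [h]; exact e3 _
end count
end RandomHypercube
namespace RandomHypercube

instance (n : ℕ) : IsProbabilityMeasure (cubeMeasure n) := by
  have : IsProbabilityMeasure ((volume : Measure ℝ).restrict (Set.Icc 0 1)) := ⟨by simp⟩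
  unfold cubeMeasure
  infer_instance

lemma ae_inj (n : ℕ) : ∀ᵐ ω ∂(cubeMeasure n), Function.Injective ω := by
  have key : ∀ i j : EdgeIdx n, i ≠ j → ∀ᵐ ω ∂(cubeMeasure n), ω i ≠ ω j := by
    intro i j hij
    have h1 : cubeMeasure n = (volume : Measure (CubeOmega n)).restrict
        (Set.univ.pi fun _ => Set.Icc 0 1) := by
      rw [cubeMeasure, volume_pi, Measure.restrict_pi_pi]
    rw [h1]
    apply ae_restrict_of_ae
    let V : Submodule ℝ (CubeOmega n) :=
      LinearMap.ker ((LinearMap.proj i : CubeOmega n →ₗ[ℝ] ℝ) - (LinearMap.proj j : CubeOmega n →ₗ[ℝ] ℝ))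
    have hV : V ≠ ⊤ := by
      intro h
      have : (Pi.single i 1 : CubeOmega n) ∈ V := h ▸ Submodule.mem_top
      simp [V, hij.symm] at this
    have h0 := Measure.addHaar_submodule (volume : Measure (CubeOmega n)) V hV
    rw [ae_iff]
    refine measure_mono_null ?_ h0
    intro ω hω
    simp only [ne_eq, not_not, Set.mem_ofPred_eq] at hω
    simp [V, hω]
  have : ∀ᵐ ω ∂(cubeMeasure n), ∀ i j : EdgeIdx n, i ≠ j → ω i ≠ ω j := by
    rw [ae_all_iff]; intro i
    rw [ae_all_iff]; intro j
    by_cases h : i = j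
    · simp [h]
    · filter_upwards [key i j h] with ω hω _ using hω
  filter_upwards [this] with ω hω i j h
  by_contra hne
  exact hω i j hne h

lemma mp_perm (n : ℕ) (τ : Equiv.Perm (EdgeIdx n)) :
    MeasurePreserving (fun ω : CubeOmega n => ω ∘ τ) (cubeMeasure n) (cubeMeasure n) := by
  have := measurePreserving_arrowCongr'
    (fun _ : EdgeIdx n => (volume : Measure ℝ).restrict (Set.Icc 0 1))
    (fun _ : EdgeIdx n => (volume : Measure ℝ).restrict (Set.Icc 0 1)) τ.symm
    (MeasurableEquiv.refl ℝ) (fun i => MeasurePreserving.id _)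
  exact this

open Classical in
lemma sym_bound (n : ℕ) {ι : Type*} [Fintype ι] (P : ι → Equiv.Perm (EdgeIdx n))
    (A : Set (CubeOmega n)) (hA : MeasurableSet A) (K : ℕ)
    (h : ∀ ω : CubeOmega n, Function.Injective ω →
      (Finset.univ.filter fun τ : ι => ω ∘ P τ ∈ A).card ≤ K) :
    (Fintype.card ι : ENNReal) * cubeMeasure n A ≤ K := by
  have h1 : ∀ τ : ι, cubeMeasure n A
      = ∫⁻ ω, A.indicator (fun _ => (1 : ENNReal)) (ω ∘ P τ) ∂(cubeMeasure n) := by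
    intro τ
    rw [(mp_perm n (P τ)).lintegral_comp (f := A.indicator (fun _ => (1 : ENNReal)))
      (measurable_const.indicator hA), lintegral_indicator hA]
    simp
  calc (Fintype.card ι : ENNReal) * cubeMeasure n A = ∑ τ : ι, cubeMeasure n A := by simp
    _ = ∑ τ : ι, ∫⁻ ω, A.indicator (fun _ => (1 : ENNReal)) (ω ∘ P τ) ∂(cubeMeasure n) :=
        Finset.sum_congr rfl fun τ _ => h1 τ
    _ = ∫⁻ ω, ∑ τ : ι, A.indicator (fun _ => (1 : ENNReal)) (ω ∘ P τ) ∂(cubeMeasure n) := by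
        rw [lintegral_finsetSum]
        intro τ _
        exact (measurable_const.indicator hA).comp (mp_perm n (P τ)).measurable
    _ ≤ ∫⁻ ω, (K : ENNReal) ∂(cubeMeasure n) := by
        apply lintegral_mono_ae
        filter_upwards [ae_inj n] with ω hω
        have := h ω hω
        simp only [Set.indicator_apply, Finset.sum_boole]
        exact_mod_cast this
    _ = K := by simp

lemma initSeg_card (n : ℕ) (σ : Equiv.Perm (Fin n)) (j : Fin n) : (initSeg n σ j).card = j := by
  rw [initSeg, Finset.card_image_of_injective _ σ.injective]
  have : (Finset.univ.filter fun i : Fin n => i < j) = Finset.Iio j := by ext; simp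
  rw [this, Fin.card_Iio]

lemma measurableSet_acc (n : ℕ) (σ : Equiv.Perm (Fin n)) :
    MeasurableSet {ω | Accessible n σ ω} := by
  have : {ω | Accessible n σ ω} = ⋂ i : Fin n, ⋂ j : Fin n, ⋂ _ : i < j,
      {ω : CubeOmega n | ω (pathEdge n σ i) < ω (pathEdge n σ j)} := by
    ext ω
    simp [Accessible, StrictMono]
  rw [this]
  refine MeasurableSet.iInter fun i => MeasurableSet.iInter fun j => MeasurableSet.iInter fun _ => ?_
  exact measurableSet_lt (measurable_pi_apply _) (measurable_pi_apply _)

open Classical in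
lemma pairProb_le (n : ℕ) (σ σ' : Equiv.Perm (Fin n)) (s : ℕ)
    (hs : (sharedSteps n σ σ').card = s) :
    pairProb n σ σ' ≤ ((2 * (n - s)).choose (n - s) : ℝ) / ((2 * n - s).factorial : ℝ) := by
  let pr : EdgeIdx n → Prop := fun e => ∃ j, e = pathEdge n σ j ∨ e = pathEdge n σ' j
  let E := {e // pr e}
  let p : Fin n → E := fun j => ⟨pathEdge n σ j, j, Or.inl rfl⟩
  let q : Fin n → E := fun j => ⟨pathEdge n σ' j, j, Or.inr rfl⟩
  have hlt : ∀ e : E, e.1.1.card < n := by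
    rintro ⟨e, j, rfl | rfl⟩ <;> simp [pathEdge, initSeg_card]
  let lev : E → Fin n := fun e => ⟨e.1.1.card, hlt e⟩
  have hp : ∀ j, lev (p j) = j := by
    intro j; apply Fin.ext; simp [lev, p, pathEdge, initSeg_card]
  have hq : ∀ j, lev (q j) = j := by
    intro j; apply Fin.ext; simp [lev, q, pathEdge, initSeg_card]
  have hE : ∀ e, e = p (lev e) ∨ e = q (lev e) := by
    rintro ⟨e, j, rfl | rfl⟩
    · left
      exact congrArg p (hp j).symm
    · right
      exact congrArg q (hq j).symm
  have hcard : (Finset.univ.filter fun j => p j = q j).card = s := by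
    rw [← hs, sharedSteps]
    congr 1
    ext j
    simp only [Finset.mem_filter, Finset.mem_univ, true_and]
    exact Subtype.ext_iff
  obtain ⟨A, hA⟩ : ∃ A : Set (CubeOmega n), A = {ω | Accessible n σ ω ∧ Accessible n σ' ω} :=
    ⟨_, rfl⟩
  have hAm : MeasurableSet A := by
    rw [hA]
    exact (measurableSet_acc n σ).inter (measurableSet_acc n σ')
  have hAi : ∀ ω, ω ∈ A ↔ (Accessible n σ ω ∧ Accessible n σ' ω) := by
    intro ω
    rw [hA]
    exact Iff.rfl
  have hb := sym_bound n (fun τ : Equiv.Perm E => Equiv.Perm.ofSubtype τ)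
    A hAm ((2 * (n - s)).choose (n - s)) (by
      intro ω hω
      refine le_trans (le_of_eq ?_)
        (count_le p q lev hp hq hE (fun e => ω e.1) (fun a b h => Subtype.ext (hω h)) s hcard)
      congr 1
      ext τ
      have h1 : (fun j => (ω ∘ (Equiv.Perm.ofSubtype τ)) (pathEdge n σ j))
          = (fun e : E => ω e.1) ∘ (τ ∘ p) := by
        funext j
        exact congrArg ω (Equiv.Perm.ofSubtype_apply_coe τ (p j))
      have h2 : (fun j => (ω ∘ (Equiv.Perm.ofSubtype τ)) (pathEdge n σ' j))
          = (fun e : E => ω e.1) ∘ (τ ∘ q) := by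
        funext j
        exact congrArg ω (Equiv.Perm.ofSubtype_apply_coe τ (q j))
      refine Finset.mem_filter.trans (Iff.trans ?_ Finset.mem_filter.symm)
      rw [← h1, ← h2, hAi]
      exact Iff.rfl)
  have hcE := card_E p q lev hp hq hE
  rw [hcard] at hcE
  rw [Fintype.card_perm, hcE] at hb
  rw [le_div_iff₀ (by positivity), mul_comm, pairProb, ← hA]
  have := ENNReal.toReal_mono (by simp) hb
  simpa using this

end RandomHypercube
namespace RandomHypercube

def gapsFrom (n a : ℕ) (l : List ℕ) : List ℕ :=
  List.zipWith (fun a b => b - a) (a :: l.map (· + 1)) (l ++ [n])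

lemma gapsFrom_nil (n a : ℕ) : gapsFrom n a [] = [n - a] := rfl
lemma gapsFrom_cons (n a x : ℕ) (l : List ℕ) :
    gapsFrom n a (x :: l) = (x - a) :: gapsFrom n (x + 1) l := rfl

lemma gapsFrom_length (n a : ℕ) (l : List ℕ) : (gapsFrom n a l).length = l.length + 1 := by
  simp [gapsFrom]

lemma gapsFrom_inj (n : ℕ) (l l' : List ℕ) : ∀ a, (∀ x ∈ l, a ≤ x) → (∀ x ∈ l', a ≤ x) →
    l.Pairwise (· < ·) → l'.Pairwise (· < ·) → gapsFrom n a l = gapsFrom n a l' → l = l' := by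
  induction l generalizing l' with
  | nil =>
    intro a _ _ _ _ h
    have := congrArg List.length h
    rw [gapsFrom_length, gapsFrom_length] at this
    cases l' with
    | nil => rfl
    | cons => simp at this
  | cons x l ih =>
    intro a h1 h2 p1 p2 h
    cases l' with
    | nil =>
      have := congrArg List.length h
      rw [gapsFrom_length, gapsFrom_length] at this
      simp at this
    | cons y l' =>
      rw [gapsFrom_cons, gapsFrom_cons] at h
      rw [List.pairwise_cons] at p1 p2
      simp only [List.cons.injEq] at h
      have hx := h1 x (by simp)
      have hy := h2 y (by simp)
      have hxy : x = y := by omega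
      subst hxy
      rw [ih l' (x + 1) p1.1 p2.1 p1.2 p2.2 h.2]

lemma gapsFrom_getD (n : ℕ) (l : List ℕ) : ∀ a i, (∀ x ∈ l, a ≤ x ∧ x < n) →
    l.Pairwise (· < ·) → (gapsFrom n a l).getD i 0 =
      ((Finset.Ico a n).filter fun j => j ∉ l ∧ l.countP (· < j) = i).card := by
  induction l with
  | nil =>
    intro a i _ _
    rw [gapsFrom_nil]
    cases i with
    | zero => simp
    | succ i => simp
  | cons x l ih =>
    intro a i h p
    rw [List.pairwise_cons] at p
    have hx := h x (by simp)
    rw [gapsFrom_cons]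
    cases i with
    | zero =>
      have : ((Finset.Ico a n).filter fun j => j ∉ x :: l ∧ (x :: l).countP (· < j) = 0)
          = Finset.Ico a x := by
        ext j
        simp only [Finset.mem_filter, Finset.mem_Ico, List.mem_cons, not_or, List.countP_eq_zero,
          decide_eq_true_eq, forall_eq_or_imp]
        constructor
        · rintro ⟨h1, ⟨h2, _⟩, h3, _⟩
          omega
        · rintro ⟨h1, h2⟩
          refine ⟨⟨h1, by omega⟩, ⟨by omega, ?_⟩, by omega, ?_⟩
          · intro hj
            have := p.1 j hj
            omega
          · intro y hy
            have := p.1 y hy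
            omega
      rw [this]
      simp
    | succ i =>
      rw [List.getD_cons_succ, ih (x + 1) i (fun y hy => ⟨p.1 y hy, (h y (by simp [hy])).2⟩) p.2]
      congr 1
      ext j
      simp only [Finset.mem_filter, Finset.mem_Ico, List.mem_cons, not_or, List.countP_cons,
        decide_eq_true_eq]
      constructor
      · rintro ⟨h1, h2, h3⟩
        refine ⟨by omega, ⟨by omega, h2⟩, ?_⟩
        rw [if_pos (by omega)]; omega
      · rintro ⟨h1, ⟨h2, h2'⟩, h3⟩
        have : x < j := by
          by_contra hc
          rw [if_neg hc] at h3
          have : 0 < l.countP (· < j) := by omega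
          rw [List.countP_pos_iff] at this
          obtain ⟨y, hy, hyj⟩ := this
          have := p.1 y hy
          simp only [decide_eq_true_eq] at hyj
          omega
        rw [if_pos this] at h3
        exact ⟨by omega, h2', by omega⟩

lemma filter_len (L : List ℕ) : (L.filter (· != 0)).length
    = ((Finset.range L.length).filter fun i => L.getD i 0 ≠ 0).card := by
  induction L with
  | nil => simp
  | cons x L ih =>
    rw [Finset.card_filter, List.length_cons, Finset.sum_range_succ']
    simp only [List.getD_cons_succ, List.getD_cons_zero]
    rw [← Finset.card_filter, ← ih, List.filter_cons]
    by_cases hx : x = 0 <;> simp [hx]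

/-- number of elements of `S` below `j` -/
def cnt {n : ℕ} (S : Finset (Fin n)) (j : Fin n) : ℕ := (S.filter fun x => x < j).card

/-- gap sizes -/
def kf {n : ℕ} (S : Finset (Fin n)) (i : ℕ) : ℕ :=
  (Finset.univ.filter fun j => j ∉ S ∧ cnt S j = i).card

def LS {n : ℕ} (S : Finset (Fin n)) : List ℕ := (S.sort (· ≤ ·)).map Fin.val

lemma LS_pairwise {n : ℕ} (S : Finset (Fin n)) : (LS S).Pairwise (· < ·) := by
  rw [LS, List.pairwise_map]
  exact (Finset.sortedLT_sort S).pairwise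

lemma mem_LS {n : ℕ} (S : Finset (Fin n)) (j : Fin n) : (j : ℕ) ∈ LS S ↔ j ∈ S := by
  simp [LS, Fin.val_inj]

lemma LS_lt {n : ℕ} (S : Finset (Fin n)) : ∀ x ∈ LS S, 0 ≤ x ∧ x < n := by
  intro x hx
  simp only [LS, List.mem_map] at hx
  obtain ⟨j, _, rfl⟩ := hx
  exact ⟨Nat.zero_le _, j.2⟩

lemma LS_length {n : ℕ} (S : Finset (Fin n)) : (LS S).length = S.card := by
  simp [LS]

lemma LS_countP {n : ℕ} (S : Finset (Fin n)) (j : Fin n) :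
    (LS S).countP (· < (j : ℕ)) = cnt S j := by
  rw [LS, List.countP_map, cnt, List.countP_eq_length_filter]
  have h1 : ((S.sort (· ≤ ·)).filter ((fun x : ℕ => decide (x < (j : ℕ))) ∘ Fin.val)).toFinset
      = S.filter fun x => x < j := by
    ext x
    simp
  rw [← h1, List.toFinset_card_of_nodup]
  exact (Finset.sort_nodup S _).filter _

lemma LS_inj {n : ℕ} (S S' : Finset (Fin n)) (h : LS S = LS S') : S = S' := by
  ext j
  rw [← mem_LS, h, mem_LS]

lemma kf_eq {n : ℕ} (S : Finset (Fin n)) (i : ℕ) :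
    (gapsFrom n 0 (LS S)).getD i 0 = kf S i := by
  rw [gapsFrom_getD n _ 0 i (LS_lt S) (LS_pairwise S), kf]
  symm
  apply Finset.card_bij (fun (j : Fin n) _ => (j : ℕ))
  · intro j hj
    simpa [mem_LS, LS_countP] using hj
  · intro a _ b _ h
    exact Fin.ext h
  · intro b hb
    simp only [Finset.mem_filter, Finset.mem_Ico] at hb
    refine ⟨⟨b, hb.1.2⟩, ?_, rfl⟩
    have h1 := mem_LS S ⟨b, hb.1.2⟩
    have h2 := LS_countP S ⟨b, hb.1.2⟩
    simp only [Finset.mem_filter, Finset.mem_univ, true_and]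
    rw [← h1, ← h2]
    exact hb.2

lemma kf_inj {n : ℕ} (S S' : Finset (Fin n)) (hc : S.card = S'.card)
    (h : ∀ i < S.card + 1, kf S i = kf S' i) : S = S' := by
  apply LS_inj
  refine gapsFrom_inj n _ _ 0 (by simp) (by simp) (LS_pairwise S) (LS_pairwise S') ?_
  apply List.ext_getElem
  · rw [gapsFrom_length, gapsFrom_length, LS_length, LS_length, hc]
  · intro i h1 h2
    have := h i (by rwa [gapsFrom_length, LS_length] at h1)
    rw [← kf_eq, ← kf_eq, List.getD_eq_getElem _ _ h1, List.getD_eq_getElem _ _ h2] at this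
    exact this

lemma numGaps_eq (n : ℕ) (σ σ' : Equiv.Perm (Fin n)) (s : ℕ)
    (hs : (sharedSteps n σ σ').card = s) :
    numGaps n σ σ' = (Finset.univ.filter fun i : Fin (s + 1) =>
      kf (sharedSteps n σ σ') i ≠ 0).card := by
  have : gapVector n σ σ' = gapsFrom n 0 (LS (sharedSteps n σ σ')) := rfl
  rw [numGaps, this, filter_len, gapsFrom_length, LS_length, hs, Finset.card_filter,
    Finset.card_filter, Finset.sum_range]
  simp only [kf_eq]

lemma cnt_le {n : ℕ} (S : Finset (Fin n)) (j : Fin n) : cnt S j < S.card + 1 :=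
  Nat.lt_succ_of_le (Finset.card_filter_le _ _)

lemma cnt_mono {n : ℕ} (S : Finset (Fin n)) {i j : Fin n} (h : i ≤ j) : cnt S i ≤ cnt S j := by
  apply Finset.card_le_card
  intro x
  simp only [Finset.mem_filter]
  rintro ⟨a, b⟩
  exact ⟨a, b.trans_le h⟩

lemma sum_kf {n : ℕ} (S : Finset (Fin n)) (s : ℕ) (hs : S.card = s) :
    ∑ i : Fin (s + 1), kf S i = n - s := by
  subst hs
  have h1 := Finset.card_eq_sum_card_fiberwise (s := Sᶜ) (t := Finset.range (S.card + 1))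
    (f := cnt S) (fun j _ => by simpa using cnt_le S j)
  rw [Finset.card_compl, Fintype.card_fin, Finset.sum_range] at h1
  rw [h1]
  apply Finset.sum_congr rfl
  intro i _
  rw [kf]
  congr 1
  ext j
  simp

/-- fibre function -/
def ff {n : ℕ} (S : Finset (Fin n)) (j : Fin n) : Fin (S.card + 1) ⊕ Fin n :=
  if j ∈ S then Sum.inr j else Sum.inl ⟨cnt S j, cnt_le S j⟩

lemma shared_facts (n : ℕ) (ρ : Equiv.Perm (Fin n)) (x : Fin n) :
    x ∈ sharedSteps n 1 ρ ↔ (ρ x = x ∧ ∀ j, j < x ↔ ρ j < x) := by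
  simp only [sharedSteps, Finset.mem_filter, Finset.mem_univ, true_and, pathEdge, Prod.mk.injEq,
    initSeg]
  constructor
  · rintro ⟨h1, h2⟩
    refine ⟨h2.symm, fun j => ?_⟩
    have := Finset.ext_iff.1 h1 (ρ j)
    simp only [Finset.mem_image, Finset.mem_filter, Finset.mem_univ, true_and,
      Equiv.Perm.coe_one, id, exists_eq_right, ρ.injective.eq_iff] at this
    exact this.symm
  · rintro ⟨h1, h2⟩
    refine ⟨?_, h1.symm⟩
    ext y
    obtain ⟨j, rfl⟩ := ρ.surjective y
    simp only [Finset.mem_image, Finset.mem_filter, Finset.mem_univ, true_and,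
      Equiv.Perm.coe_one, id, exists_eq_right, ρ.injective.eq_iff]
    exact (h2 j).symm

lemma ff_comp (n : ℕ) (ρ : Equiv.Perm (Fin n)) :
    ff (sharedSteps n 1 ρ) ∘ ρ = ff (sharedSteps n 1 ρ) := by
  funext j
  set S := sharedSteps n 1 ρ with hS
  have hf := fun x => shared_facts n ρ x
  rw [← hS] at hf
  simp only [Function.comp]
  by_cases hj : j ∈ S
  · rw [((hf j).1 hj).1]
  · have hj' : ρ j ∉ S := by
      intro h
      have := ((hf _).1 h).1
      rw [ρ.injective this] at h
      exact hj h
    have hc : cnt S (ρ j) = cnt S j := by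
      unfold cnt
      congr 1
      ext x
      simp only [Finset.mem_filter, and_congr_right_iff]
      intro hx
      have h2 := ((hf x).1 hx).2 j
      have n1 : x ≠ j := fun h => hj (h ▸ hx)
      have n2 : x ≠ ρ j := fun h => hj' (h ▸ hx)
      constructor
      · intro h
        by_contra hc
        exact absurd (h2.1 (lt_of_le_of_ne (not_lt.1 hc) n1.symm)) (not_lt.2 h.le)
      · intro h
        by_contra hc
        exact absurd (h2.2 (lt_of_le_of_ne (not_lt.1 hc) n2.symm)) (not_lt.2 h.le)
    simp only [ff, if_neg hj, if_neg hj', hc]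

lemma ff_eq_inl {n : ℕ} (S : Finset (Fin n)) (j : Fin n) (i : Fin (S.card + 1)) :
    ff S j = Sum.inl i ↔ j ∉ S ∧ cnt S j = i := by
  by_cases hj : j ∈ S <;> simp [ff, hj, Fin.ext_iff]

lemma kf_ne_one (n : ℕ) (ρ : Equiv.Perm (Fin n)) (i : ℕ) : kf (sharedSteps n 1 ρ) i ≠ 1 := by
  intro h
  have hff := congrFun (ff_comp n ρ)
  have hf := fun x => shared_facts n ρ x
  set S := sharedSteps n 1 ρ with hS
  rw [kf, Finset.card_eq_one] at h
  obtain ⟨j, hj⟩ := h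
  have hmem : ∀ x, (x ∉ S ∧ cnt S x = i) ↔ x = j := by
    intro x
    have := Finset.ext_iff.1 hj x
    simpa using this
  have hpres : ∀ x, x ∉ S → ρ x ∉ S ∧ cnt S (ρ x) = cnt S x := by
    intro x hx
    have h1 := hff x
    simp only [Function.comp] at h1
    have h2 := (ff_eq_inl S x ⟨cnt S x, cnt_le S x⟩).2 ⟨hx, rfl⟩
    rw [h2] at h1
    exact (ff_eq_inl S _ _).1 h1
  obtain ⟨hjS, hji⟩ := (hmem j).2 rfl
  have hρj : ρ j = j := (hmem _).1 ⟨(hpres j hjS).1, (hpres j hjS).2.trans hji⟩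
  apply hjS
  rw [hf]
  refine ⟨hρj, fun x => ?_⟩
  by_cases hx : x ∈ S
  · rw [((hf x).1 hx).1]
  · obtain ⟨hx1, hx2⟩ := hpres x hx
    have hne : x ≠ j → ρ x ≠ j := fun hn h => hn (ρ.injective (h.trans hρj.symm))
    constructor
    · intro hlt
      by_contra hc
      have hgt := not_lt.1 hc
      have a := cnt_mono S hlt.le
      have b := cnt_mono S hgt
      exact hlt.ne ((hmem x).1 ⟨hx, by omega⟩)
    · intro hlt
      by_contra hc
      have hgt := not_lt.1 hc
      have a := cnt_mono S hlt.le
      have b := cnt_mono S hgt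
      have := (hmem x).1 ⟨hx, by omega⟩
      rw [this, hρj] at hlt
      exact lt_irrefl _ hlt

lemma fiber_count (n : ℕ) (S : Finset (Fin n)) :
    (Finset.univ.filter fun ρ : Equiv.Perm (Fin n) => sharedSteps n 1 ρ = S).card
      ≤ ∏ i : Fin (S.card + 1), (kf S i).factorial := by
  classical
  have h1 := DomMulAct.stabilizer_card (ff S)
  rw [Fintype.prod_sum_type] at h1
  have h2 : ∀ j : Fin n, (Fintype.card {a // ff S a = Sum.inr j}).factorial = 1 := by
    intro j
    have : Fintype.card {a // ff S a = Sum.inr j} ≤ 1 := by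
      rw [Fintype.card_le_one_iff_subsingleton]
      constructor
      rintro ⟨a, ha⟩ ⟨b, hb⟩
      have : ∀ a, ff S a = Sum.inr j → a = j := by
        intro a ha
        by_cases h : a ∈ S <;> simp [ff, h] at ha
        exact ha
      simp [this a ha, this b hb]
    exact Nat.factorial_eq_one.2 this
  have h3 : ∀ i : Fin (S.card + 1), Fintype.card {a // ff S a = Sum.inl i} = kf S i := by
    intro i
    rw [Fintype.card_subtype, kf]
    congr 1
    ext j
    simp [ff_eq_inl]
  simp only [h2, h3, Finset.prod_const_one, mul_one] at h1
  rw [← h1, Fintype.card_subtype]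
  apply Finset.card_le_card
  intro ρ
  simp only [Finset.mem_filter, Finset.mem_univ, true_and]
  rintro rfl
  exact ff_comp n ρ

end RandomHypercube
namespace RandomHypercube

lemma fact_two (a b : ℕ) : (a + 2).factorial * (b + 2).factorial ≤ 2 * (a + b + 2).factorial := by
  induction a with
  | zero => simp [Nat.factorial]
  | succ a ih =>
    have e1 : (a + 1 + 2).factorial = (a + 3) * (a + 2).factorial := Nat.factorial_succ (a + 2)
    have e2 : (a + 1 + b + 2).factorial = (a + b + 3) * (a + b + 2).factorial := by
      rw [show a + 1 + b + 2 = (a + b + 2) + 1 by ring, Nat.factorial_succ]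
    rw [e1, e2]
    calc (a + 3) * (a + 2).factorial * (b + 2).factorial
        = (a + 3) * ((a + 2).factorial * (b + 2).factorial) := by ring
      _ ≤ (a + b + 3) * (2 * (a + b + 2).factorial) := Nat.mul_le_mul (by omega) ih
      _ = _ := by ring

lemma prod_fact {ι : Type*} [DecidableEq ι] (Z : Finset ι) (hZ : Z.Nonempty) (k : ι → ℕ) :
    ∏ i ∈ Z, (k i + 2).factorial ≤ 2 ^ (Z.card - 1) * (∑ i ∈ Z, k i + 2).factorial := by
  induction hZ using Finset.Nonempty.cons_induction with
  | singleton a => simp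
  | cons a s ha hs ih =>
    rw [Finset.prod_cons, Finset.sum_cons, Finset.card_cons]
    have hc : 1 ≤ s.card := hs.card_pos
    calc (k a + 2).factorial * ∏ i ∈ s, (k i + 2).factorial
        ≤ (k a + 2).factorial * (2 ^ (s.card - 1) * (∑ i ∈ s, k i + 2).factorial) :=
          Nat.mul_le_mul_left _ ih
      _ = 2 ^ (s.card - 1) * ((k a + 2).factorial * (∑ i ∈ s, k i + 2).factorial) := by ring
      _ ≤ 2 ^ (s.card - 1) * (2 * (k a + ∑ i ∈ s, k i + 2).factorial) :=
          Nat.mul_le_mul_left _ (fact_two _ _)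
      _ = _ := by
          rw [show s.card + 1 - 1 = (s.card - 1) + 1 by omega, pow_succ]; ring

/-- support of the gap vector -/
def supp {n : ℕ} (s : ℕ) (S : Finset (Fin n)) : Finset (Fin (s + 1)) :=
  Finset.univ.filter fun i : Fin (s + 1) => kf S i ≠ 0

/-- The set of valid shared sets has these properties. -/
def Good (n s g : ℕ) (S : Finset (Fin n)) : Prop :=
  S.card = s ∧ (supp s S).card = g ∧ ∀ i, kf S i ≠ 1

lemma good_sum {n s g : ℕ} {S : Finset (Fin n)} (h : Good n s g S) :
    ∑ i ∈ supp s S, (kf S i - 2) + 2 * g = n - s := by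
  rw [← sum_kf S s h.1, ← h.2.1, mul_comm, ← smul_eq_mul, ← Finset.sum_const,
    ← Finset.sum_add_distrib]
  have : ∑ i : Fin (s + 1), kf S i = ∑ i ∈ supp s S, kf S i := by
    symm
    apply Finset.sum_subset (Finset.subset_univ _)
    intro i _ hi
    simpa [supp] using hi
  rw [this]
  apply Finset.sum_congr rfl
  intro i hi
  have h1 : kf S i ≠ 0 := by simpa [supp] using hi
  have := h.2.2 i
  omega

lemma good_prod {n s g : ℕ} {S : Finset (Fin n)} (h : Good n s g S) (hg : 1 ≤ g) :
    ∏ i : Fin (s + 1), (kf S i).factorial ≤ 2 ^ (g - 1) * (n - s - 2 * g + 2).factorial := by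
  have h1 : ∏ i : Fin (s + 1), (kf S i).factorial = ∏ i ∈ supp s S, (kf S i - 2 + 2).factorial := by
    rw [← Finset.prod_subset (Finset.subset_univ (supp s S))]
    · apply Finset.prod_congr rfl
      intro i hi
      have h1 : kf S i ≠ 0 := by simpa [supp] using hi
      have := h.2.2 i
      congr 1
      omega
    · intro i _ hi
      have : kf S i = 0 := by simpa [supp] using hi
      simp [this]
  rw [h1]
  have hne : (supp s S).Nonempty := by
    rw [← Finset.card_pos, h.2.1]; omega
  refine (prod_fact _ hne _).trans ?_
  have := good_sum h
  rw [h.2.1, show ∑ i ∈ supp s S, (kf S i - 2) = n - s - 2 * g by omega]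

lemma good_card (n s g : ℕ) (F : Finset (Finset (Fin n))) (hF : ∀ S ∈ F, Good n s g S) :
    F.card ≤ (s + 1).choose g * (g + (n - s - 2 * g) - 1).choose (n - s - 2 * g) := by
  classical
  have key : F.card ≤ ((Finset.powersetCard g (Finset.univ : Finset (Fin (s + 1)))).sigma
      fun Z => Finset.finsuppAntidiag Z (n - s - 2 * g)).card := by
    apply Finset.card_le_card_of_injOn (fun S : Finset (Fin n) =>
      (⟨supp s S, Finsupp.equivFunOnFinite.symm fun i : Fin (s + 1) => kf S i - 2⟩ :
        Σ _ : Finset (Fin (s + 1)), (Fin (s + 1) →₀ ℕ)))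
    · intro S hS
      have h := hF S hS
      have h2 := good_sum h
      rw [Finset.mem_coe, Finset.mem_sigma]
      refine ⟨?_, ?_⟩
      · simpa [Finset.mem_powersetCard] using h.2.1
      · rw [Finset.mem_finsuppAntidiag]
        constructor
        · simp only [Finsupp.coe_equivFunOnFinite_symm]
          omega
        · intro i hi
          simp only [Finsupp.mem_support_iff, Finsupp.equivFunOnFinite_symm_apply_apply] at hi
          simp only [supp, Finset.mem_filter, Finset.mem_univ, true_and]
          omega
    · intro S hS S' hS' heq
      have h := hF S hS
      have h' := hF S' hS'
      simp only [Sigma.mk.injEq, heq_eq_eq] at heq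
      obtain ⟨e1, e2⟩ := heq
      have e2 := Finsupp.equivFunOnFinite.symm.injective e2
      apply kf_inj S S' (h.1.trans h'.1.symm)
      intro i hi
      rw [h.1] at hi
      have a := congrFun e2 ⟨i, hi⟩
      have b := Finset.ext_iff.1 e1 ⟨i, hi⟩
      simp only [supp, Finset.mem_filter, Finset.mem_univ, true_and] at a b
      have c1 := h.2.2 i
      have c2 := h'.2.2 i
      omega
  refine key.trans (le_of_eq ?_)
  rw [Finset.card_sigma]
  rw [Finset.sum_congr rfl (g := fun _ => (g + (n - s - 2 * g) - 1).choose (n - s - 2 * g))]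
  · rw [Finset.sum_const, Finset.card_powersetCard, Finset.card_univ, Fintype.card_fin, smul_eq_mul]
  · intro Z hZ
    rw [Finset.card_finsuppAntidiag_nat_eq_choose, (Finset.mem_powersetCard.1 hZ).2]

lemma shared_mul (n : ℕ) (σ ρ : Equiv.Perm (Fin n)) :
    sharedSteps n σ (σ * ρ) = sharedSteps n 1 ρ := by
  have h : ∀ ρ j, initSeg n (σ * ρ) j = (initSeg n ρ j).image σ := by
    intro ρ j
    simp only [initSeg, Finset.image_image, Equiv.Perm.coe_mul]
  have h1 : ∀ j, initSeg n σ j = (initSeg n 1 j).image σ := by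
    intro j
    rw [← h, mul_one]
  ext j
  simp only [sharedSteps, pathEdge, Finset.mem_filter, Finset.mem_univ, true_and, Prod.mk.injEq,
    h, h1, (Finset.image_injective σ.injective).eq_iff, Equiv.Perm.coe_mul, Function.comp,
    Equiv.Perm.coe_one, id, σ.injective.eq_iff]

lemma pairs_card (n s g : ℕ) (hg : 1 ≤ g) :
    (Finset.univ.filter
      (fun p : Equiv.Perm (Fin n) × Equiv.Perm (Fin n) =>
        (sharedSteps n p.1 p.2).card = s ∧ numGaps n p.1 p.2 = g)).card
      ≤ n.factorial * ((2 ^ (g - 1) * (n - s - 2 * g + 2).factorial) *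
        ((s + 1).choose g * (g + (n - s - 2 * g) - 1).choose (n - s - 2 * g))) := by
  classical
  set Q := Finset.univ.filter (fun ρ : Equiv.Perm (Fin n) =>
      (sharedSteps n 1 ρ).card = s ∧ numGaps n 1 ρ = g) with hQ
  have hnum : ∀ σ ρ, numGaps n σ (σ * ρ) = numGaps n 1 ρ := by
    intro σ ρ
    simp only [numGaps, gapVector, shared_mul]
  have h1 : (Finset.univ.filter
      (fun p : Equiv.Perm (Fin n) × Equiv.Perm (Fin n) =>
        (sharedSteps n p.1 p.2).card = s ∧ numGaps n p.1 p.2 = g)).card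
      ≤ ((Finset.univ : Finset (Equiv.Perm (Fin n))) ×ˢ Q).card := by
    apply Finset.card_le_card_of_injOn
      (fun p : Equiv.Perm (Fin n) × Equiv.Perm (Fin n) => (p.1, p.1⁻¹ * p.2))
    · rintro ⟨σ, σ'⟩ hp
      obtain ⟨ρ, rfl⟩ : ∃ ρ, σ' = σ * ρ := ⟨σ⁻¹ * σ', by simp⟩
      rw [Finset.mem_coe, Finset.mem_filter] at hp
      simp only [shared_mul, hnum] at hp
      rw [Finset.mem_coe, Finset.mem_product, hQ, Finset.mem_filter]
      simpa using hp.2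
    · rintro ⟨a, b⟩ _ ⟨c, d⟩ _ h
      simp only [Prod.mk.injEq] at h
      obtain ⟨rfl, h⟩ := h
      rw [mul_right_inj] at h
      rw [h]
  refine h1.trans ?_
  rw [Finset.card_product, Finset.card_univ, Fintype.card_perm, Fintype.card_fin]
  apply Nat.mul_le_mul_left
  have hgood : ∀ S ∈ Q.image (sharedSteps n 1), Good n s g S := by
    intro S hS
    rw [Finset.mem_image] at hS
    obtain ⟨ρ, hρ, rfl⟩ := hS
    rw [hQ, Finset.mem_filter] at hρ
    refine ⟨hρ.2.1, ?_, kf_ne_one n ρ⟩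
    rw [supp, ← numGaps_eq n 1 ρ s hρ.2.1]
    exact hρ.2.2
  refine (Finset.card_le_mul_card_image (f := sharedSteps n 1) Q
    (2 ^ (g - 1) * (n - s - 2 * g + 2).factorial) ?_).trans
    (Nat.mul_le_mul_left _ (good_card n s g _ hgood))
  intro S hS
  have hG := hgood S hS
  refine le_trans ?_ (good_prod hG hg)
  have := fiber_count n S
  rw [hG.1] at this
  refine le_trans (Finset.card_le_card ?_) this
  intro ρ
  simp only [Finset.mem_filter, Finset.mem_univ, true_and]
  exact fun h => h.2

/-- Numerical inequality. -/
lemma num_ineq (m g : ℕ) (hg : 1 ≤ g) (hm : 2 * g ≤ m) :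
    (m - 2 * g + 2).factorial * (g + (m - 2 * g) - 1).choose (m - 2 * g)
      * ((g - 1).factorial * (m - g) ^ (g - 1)) ≤ m.factorial := by
  obtain ⟨h, rfl⟩ : ∃ h, g = h + 1 := ⟨g - 1, by omega⟩
  obtain ⟨t, rfl⟩ : ∃ t, m = t + 2 * (h + 1) := ⟨m - 2 * (h + 1), by omega⟩
  rw [show t + 2 * (h + 1) - 2 * (h + 1) = t by omega, show h + 1 + t - 1 = t + h by omega,
    show h + 1 - 1 = h by omega, show t + 2 * (h + 1) - (h + 1) = t + h + 1 by omega]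
  have e1 : (t + h).choose t * t.factorial * h.factorial = (t + h).factorial := by
    have := Nat.add_choose_mul_factorial_mul_factorial t h
    rw [← this, Nat.choose_symm_add]
  have e2 : (t + h).factorial * (t + h + 1) ^ h ≤ (t + h + h).factorial := by
    have := Nat.factorial_mul_pow_le_factorial (m := t + h) (n := h)
    exact this
  have e3 : (t + 2 * (h + 1)).factorial = (t + h + h + 2) * ((t + h + h + 1) * (t + h + h).factorial) := by
    rw [show t + 2 * (h + 1) = (t + h + h + 1) + 1 by ring, Nat.factorial_succ, Nat.factorial_succ]
  have e4 : (t + 2).factorial = (t + 2) * ((t + 1) * t.factorial) := by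
    rw [Nat.factorial_succ, Nat.factorial_succ]
  rw [e3, e4]
  calc (t + 2) * ((t + 1) * t.factorial) * (t + h).choose t * (h.factorial * (t + h + 1) ^ h)
      = (t + 2) * ((t + 1) * (((t + h).choose t * t.factorial * h.factorial) * (t + h + 1) ^ h)) := by
        ring
    _ = (t + 2) * ((t + 1) * ((t + h).factorial * (t + h + 1) ^ h)) := by rw [e1]
    _ ≤ _ := Nat.mul_le_mul (by omega) (Nat.mul_le_mul (by omega) e2)

lemma main_bound (n s g : ℕ) (hg1 : 1 ≤ g) (hm : 2 * g ≤ n - s) :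
    c n s g
      ≤ (((2 * (n - s)).choose (n - s) : ℝ) / ((2 * n - s).choose n : ℝ))
        * ((s + 1).choose g : ℝ) * (2 : ℝ) ^ (g - 1)
        / (((g - 1).factorial : ℝ) * ((n - s - g : ℕ) : ℝ) ^ (g - 1)) := by
  have hc : c n s g ≤ ((n.factorial * ((2 ^ (g - 1) * (n - s - 2 * g + 2).factorial) *
        ((s + 1).choose g * (g + (n - s - 2 * g) - 1).choose (n - s - 2 * g))) : ℕ) : ℝ) *
        (((2 * (n - s)).choose (n - s) : ℝ) / ((2 * n - s).factorial : ℝ)) := by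
    rw [c]
    refine (Finset.sum_le_card_nsmul _ _ _ (fun p hp =>
      pairProb_le n p.1 p.2 s (Finset.mem_filter.1 hp).2.1)).trans ?_
    rw [nsmul_eq_mul]
    apply mul_le_mul_of_nonneg_right _ (by positivity)
    exact_mod_cast pairs_card n s g hg1
  refine hc.trans ?_
  have hnum := num_ineq (n - s) g hg1 hm
  have hch : ((2 * n - s).choose n : ℝ) * n.factorial * (n - s).factorial
      = (2 * n - s).factorial := by
    have := Nat.choose_mul_factorial_mul_factorial (n := 2 * n - s) (k := n) (by omega)
    rw [show 2 * n - s - n = n - s by omega] at this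
    exact_mod_cast this
  have hchpos : (0 : ℝ) < ((2 * n - s).choose n : ℝ) := by
    exact_mod_cast Nat.choose_pos (by omega)
  have hpos : (0 : ℝ) < ((g - 1).factorial : ℝ) * ((n - s - g : ℕ) : ℝ) ^ (g - 1) := by
    have : 0 < n - s - g := by omega
    positivity
  have hnum' : ((n - s - 2 * g + 2).factorial : ℝ) *
      ((g + (n - s - 2 * g) - 1).choose (n - s - 2 * g) : ℝ)
      * (((g - 1).factorial : ℝ) * ((n - s - g : ℕ) : ℝ) ^ (g - 1)) ≤ ((n - s).factorial : ℝ) := by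
    exact_mod_cast hnum
  rw [le_div_iff₀ hpos, ← hch]
  push_cast
  set D := ((g - 1).factorial : ℝ) * ((n - s - g : ℕ) : ℝ) ^ (g - 1)
  set K := ((2 * (n - s)).choose (n - s) : ℝ)
  set A := ((n - s - 2 * g + 2).factorial : ℝ)
  set B := ((g + (n - s - 2 * g) - 1).choose (n - s - 2 * g) : ℝ)
  set C := ((s + 1).choose g : ℝ)
  set W := ((2 * n - s).choose n : ℝ)
  have hn0 : (0 : ℝ) < n.factorial := by positivity
  have hm0 : (0 : ℝ) < (n - s).factorial := by positivity
  have hq : A * B * D / (n - s).factorial ≤ 1 := by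
    rw [div_le_one hm0]; exact hnum'
  calc (n.factorial : ℝ) * (2 ^ (g - 1) * A * (C * B)) * (K / (W * n.factorial * (n - s).factorial)) * D
      = (K / W * C * 2 ^ (g - 1)) * (A * B * D / (n - s).factorial) := by
        field_simp
    _ ≤ (K / W * C * 2 ^ (g - 1)) * 1 := by
        apply mul_le_mul_of_nonneg_left hq
        positivity
    _ = _ := mul_one _

end RandomHypercube

open RandomHypercube in
/-- Upper bound on the pair sum `c_{s,g}`. -/
theorem c_le_bound (n s g : ℕ) (hn : 1 ≤ n) (hs : s ≤ n - 2)
    (hg1 : 1 ≤ g) (hg2 : g ≤ min (s + 1) ((n - s) / 2)) :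
    c n s g
      ≤ (((2 * (n - s)).choose (n - s) : ℝ) / ((2 * n - s).choose n : ℝ))
        * ((s + 1).choose g : ℝ) * (2 : ℝ) ^ (g - 1)
        / (((g - 1).factorial : ℝ) * ((n - s - g : ℕ) : ℝ) ^ (g - 1)) := by
  have h1 := hg2.trans (min_le_right _ _)
  exact main_bound n s g hg1 (by omega)
end

section
/- Define f : [0,1] → ℝ by f(x) = log((2−x)^{2−x} / (4(1−x))^{1−x}) for x ∈ [0,1), extended continuously by f(1) = 0. Then: (i) there exists a constant C > 0 such that for all integers n ≥ 2 and all 0 ≤ s ≤ n−1, C(2(n−s), n−s) / C(2n−s, n) ≤ C · e^{−n·f(s/n)}; (ii) f(0) = f(1) = 0; (iii) f is strictly increasing on [0, 2/3] and strictly decreasing on [2/3, 1]; and (iv) f(x) ≥ x/2 for all 0 ≤ x ≤ 1/3. -/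
open Real

/-- The exponent function `f(x) = log((2-x)^(2-x) / (4(1-x))^(1-x))`.  (With the `rpow`
convention `0 ^ 0 = 1`, this formula also yields the continuous extension `f 1 = 0`.) -/
noncomputable def gapExponent (x : ℝ) : ℝ :=
  Real.log ((2 - x) ^ (2 - x) / (4 * (1 - x)) ^ (1 - x))

lemma gap_eq {x : ℝ} (hx : x ≤ 1) :
    gapExponent x = (2 - x) * log (2 - x) - ((1 - x) * log (1 - x) + (1 - x) * log 4) := by
  unfold gapExponent
  rcases hx.lt_or_eq with h | h
  · have h1 : 0 < 1 - x := by linarith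
    have h2 : 0 < 2 - x := by linarith
    rw [log_div (by positivity) (by positivity), log_rpow h2, log_rpow (by positivity),
      log_mul (by norm_num) h1.ne']
    ring
  · subst h; norm_num

lemma gap_contOn : ContinuousOn gapExponent (Set.Iic 1) := by
  have : Continuous fun x : ℝ =>
      (2 - x) * log (2 - x) - ((1 - x) * log (1 - x) + (1 - x) * log 4) := by
    have h2 : Continuous fun x : ℝ => (2 - x) * log (2 - x) :=
      Real.continuous_mul_log.comp (by fun_prop : Continuous fun x : ℝ => 2 - x)
    have h1 : Continuous fun x : ℝ => (1 - x) * log (1 - x) :=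
      Real.continuous_mul_log.comp (by fun_prop : Continuous fun x : ℝ => 1 - x)
    fun_prop
  exact this.continuousOn.congr fun x hx => gap_eq hx

lemma gap_deriv {x : ℝ} (hx : x < 1) :
    HasDerivAt gapExponent (log (4 * (1 - x)) - log (2 - x)) x := by
  have h1 : 1 - x ≠ 0 := by linarith
  have h2 : 2 - x ≠ 0 := by linarith
  have a1 : HasDerivAt (fun y : ℝ => 1 - y) (-1) x := by
    simpa using (hasDerivAt_id x).const_sub 1
  have a2 : HasDerivAt (fun y : ℝ => 2 - y) (-1) x := by
    simpa using (hasDerivAt_id x).const_sub 2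
  have b1 := (Real.hasDerivAt_mul_log h1).comp x a1
  have b2 := (Real.hasDerivAt_mul_log h2).comp x a2
  have := b2.sub (b1.add (a1.mul_const (log 4)))
  have h := this.congr_of_eventuallyEq (f₁ := gapExponent) (by
    filter_upwards [Iio_mem_nhds hx] with y hy
    simpa using gap_eq (le_of_lt hy))
  have e : log (4 * (1 - x)) - log (2 - x)
      = (log (2 - x) + 1) * -1 - ((log (1 - x) + 1) * -1 + -1 * log 4) := by
    rw [log_mul (by norm_num) h1]
    ring
  rw [e]
  exact h

lemma gap_mono : StrictMonoOn gapExponent (Set.Icc 0 (2 / 3)) := by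
  apply strictMonoOn_of_deriv_pos (convex_Icc _ _)
  · exact gap_contOn.mono fun x hx => by simp at *; linarith [hx.2]
  · intro x hx
    simp only [interior_Icc, Set.mem_Ioo] at hx
    rw [(gap_deriv (by linarith)).deriv, sub_pos]
    exact log_lt_log (by linarith) (by linarith)

lemma gap_anti : StrictAntiOn gapExponent (Set.Icc (2 / 3) 1) := by
  apply strictAntiOn_of_deriv_neg (convex_Icc _ _)
  · exact gap_contOn.mono fun x hx => by simp at *; linarith [hx.2]
  · intro x hx
    simp only [interior_Icc, Set.mem_Ioo] at hx
    rw [(gap_deriv (by linarith)).deriv, sub_neg]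
    exact log_lt_log (by linarith) (by linarith)

lemma gap_zero : gapExponent 0 = 0 := by
  unfold gapExponent; norm_num

lemma gap_one : gapExponent 1 = 0 := by
  unfold gapExponent; norm_num

lemma gap_concave : ConcaveOn ℝ (Set.Icc 0 (1 / 3)) gapExponent := by
  apply AntitoneOn.concaveOn_of_deriv (convex_Icc _ _)
  · exact gap_contOn.mono fun x hx => by simp at *; linarith [hx.2]
  · intro x hx
    simp only [interior_Icc, Set.mem_Ioo] at hx
    exact (gap_deriv (by linarith)).differentiableAt.differentiableWithinAt
  · intro x hx y hy hxy
    simp only [interior_Icc, Set.mem_Ioo] at hx hy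
    rw [(gap_deriv (by linarith)).deriv, (gap_deriv (by linarith)).deriv,
      ← log_div (by linarith) (by linarith), ← log_div (by linarith) (by linarith)]
    apply log_le_log
    · apply div_pos <;> linarith
    · rw [div_le_div_iff₀ (by linarith) (by linarith)]
      nlinarith

lemma gap_third : 1 / 6 ≤ gapExponent (1 / 3) := by
  rw [gap_eq (by norm_num)]
  have e1 : log (2 - 1 / 3 : ℝ) = log 5 - log 3 := by
    rw [← log_div (by norm_num) (by norm_num)]; norm_num
  have e2 : log (1 - 1 / 3 : ℝ) = log 2 - log 3 := by
    rw [← log_div (by norm_num) (by norm_num)]; norm_num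
  have e3 : log (4 : ℝ) = 2 * log 2 := by
    rw [show (4 : ℝ) = 2 ^ 2 by norm_num, log_pow]; norm_num
  have e4 : 1 ≤ 10 * log 5 - (6 * log 3 + 12 * log 2) := by
    have : 10 * log 5 - (6 * log 3 + 12 * log 2) = log ((5 : ℝ) ^ 10 / (3 ^ 6 * 2 ^ 12)) := by
      rw [log_div (by norm_num) (by norm_num), log_mul (by norm_num) (by norm_num), log_pow,
        log_pow, log_pow]
      norm_num
    rw [this, le_log_iff_exp_le (by norm_num)]
    have := exp_one_lt_d9
    norm_num at *
    linarith
  rw [e1, e2, e3]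
  linarith

lemma gap_lower : ∀ x ∈ Set.Icc (0 : ℝ) (1 / 3), x / 2 ≤ gapExponent x := by
  rintro x ⟨h0, h1⟩
  have := gap_concave.2 (show (0 : ℝ) ∈ Set.Icc (0 : ℝ) (1 / 3) by norm_num)
    (show (1 / 3 : ℝ) ∈ Set.Icc (0 : ℝ) (1 / 3) by norm_num)
    (show 0 ≤ 1 - 3 * x by linarith) (show 0 ≤ 3 * x by linarith) (by ring)
  simp only [smul_eq_mul, gap_zero] at this
  rw [show (1 - 3 * x) * 0 + 3 * x * (1 / 3) = x by ring] at this
  nlinarith [gap_third]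

lemma log_fact_bounds : ∃ c d : ℝ, ∀ k : ℕ, 1 ≤ k →
    k * log k - k + 1 / 2 * log k + c ≤ log (k.factorial : ℝ) ∧
    log (k.factorial : ℝ) ≤ k * log k - k + 1 / 2 * log k + d := by
  obtain ⟨a, ha⟩ : ∃ a : ℝ, ∀ n : ℕ, a ≤ log (Stirling.stirlingSeq (n + 1)) :=
    ⟨_, Stirling.log_stirlingSeq_bounded_by_constant⟩
  refine ⟨a + 1 / 2 * log 2, log (Stirling.stirlingSeq 1) + 1 / 2 * log 2, fun k hk => ?_⟩
  obtain ⟨j, rfl⟩ : ∃ j, k = j + 1 := ⟨k - 1, by omega⟩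
  have h1 := ha j
  have h2 := Stirling.log_stirlingSeq'_antitone (Nat.zero_le j)
  simp only [Function.comp] at h2
  have h3 := Stirling.log_stirlingSeq_formula (j + 1)
  have hp : ((j + 1 : ℕ) : ℝ) ≠ 0 := by positivity
  rw [log_mul (by norm_num) hp, log_div hp (exp_pos 1).ne', log_exp] at h3
  simp only [Nat.succ_eq_add_one, zero_add] at h2
  constructor <;> linarith

lemma gap_ratio : ∃ C : ℝ, 0 < C ∧ ∀ n : ℕ, 2 ≤ n → ∀ s : ℕ, s ≤ n - 1 →
      ((2 * (n - s)).choose (n - s) : ℝ) / ((2 * n - s).choose n : ℝ)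
        ≤ C * Real.exp (-(n : ℝ) * gapExponent ((s : ℝ) / (n : ℝ))) := by
  obtain ⟨c, d, hb⟩ := log_fact_bounds
  refine ⟨exp (2 * (d - c) + 1 / 2 * log 2), exp_pos _, fun n hn s hs => ?_⟩
  obtain ⟨m, rfl⟩ : ∃ m, n = s + m := ⟨n - s, by omega⟩
  have hm : 1 ≤ m := by omega
  have e1 : s + m - s = m := by omega
  have e2 : 2 * (s + m) - s = (s + m) + m := by omega
  rw [e1, e2]
  have hsm : (s : ℝ) = ((s + m : ℕ) : ℝ) - m := by push_cast; ring
  rw [hsm]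
  generalize s + m = n at *
  have hn0 : (0 : ℝ) < n := by positivity
  have hm0 : (0 : ℝ) < m := by positivity
  have hc1 : ((2 * m).choose m : ℝ) = (2 * m).factorial / (m.factorial * m.factorial) := by
    rw [two_mul, Nat.cast_add_choose]
  rw [hc1, Nat.cast_add_choose, ← exp_add,
    ← log_le_iff_le_exp (by positivity),
    log_div (by positivity) (by positivity), log_div (by positivity) (by positivity),
    log_div (by positivity) (by positivity), log_mul (by positivity) (by positivity),
    log_mul (by positivity) (by positivity)]
  have b1 := (hb (2 * m) (by omega)).2
  have b2 := (hb n (by omega)).2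
  have b3 := (hb m hm).1
  have b4 := (hb (n + m) (by omega)).1
  have e4 : log (4 : ℝ) = 2 * log 2 := by
    rw [show (4 : ℝ) = 2 ^ 2 by norm_num, log_pow]; norm_num
  have g : (n : ℝ) * gapExponent (((n : ℝ) - m) / n)
      = (n + m) * (log (n + m) - log n) - (m * (log m - log n) + m * log 4) := by
    rw [gap_eq (by rw [div_le_one hn0]; linarith)]
    rw [show 2 - ((n : ℝ) - m) / n = (n + m) / n by field_simp; ring,
      show 1 - ((n : ℝ) - m) / n = m / n by field_simp; ring,
      log_div (by positivity) (by positivity), log_div (by positivity) (by positivity)]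
    field_simp
  have hmono : log (n : ℝ) ≤ log ((n : ℝ) + m) := log_le_log hn0 (by linarith)
  push_cast at b1 b4
  rw [log_mul (by norm_num) hm0.ne'] at b1
  rw [neg_mul, g, e4]
  linarith

/-- Properties of the exponent function `f` and the binomial-ratio bound:
(i) `C(2(n-s), n-s) / C(2n-s, n) ≤ C e^{-n f(s/n)}`; (ii) `f 0 = f 1 = 0`;
(iii) `f` is strictly increasing on `[0, 2/3]` and strictly decreasing on `[2/3, 1]`;
(iv) `f x ≥ x/2` on `[0, 1/3]`. -/
theorem gapExponent_properties :
    (∃ C : ℝ, 0 < C ∧ ∀ n : ℕ, 2 ≤ n → ∀ s : ℕ, s ≤ n - 1 →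
      ((2 * (n - s)).choose (n - s) : ℝ) / ((2 * n - s).choose n : ℝ)
        ≤ C * Real.exp (-(n : ℝ) * gapExponent ((s : ℝ) / (n : ℝ)))) ∧
    (gapExponent 0 = 0 ∧ gapExponent 1 = 0) ∧
    (StrictMonoOn gapExponent (Set.Icc 0 (2 / 3)) ∧
      StrictAntiOn gapExponent (Set.Icc (2 / 3) 1)) ∧
    (∀ x ∈ Set.Icc (0 : ℝ) (1 / 3), x / 2 ≤ gapExponent x) := by
  exact ⟨gap_ratio, ⟨gap_zero, gap_one⟩, ⟨gap_mono, gap_anti⟩, gap_lower⟩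
end
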